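/- Let (G, 𝓐) be a local convergence pairing on a Peano continuum X without cut points, and let A, B ∈ 𝓐 with A ∩ B ≠ ∅. If (f_i) ⊆ st(A) ∩ st(B) acts as a convergence sequence on both A and B, and n is the repeller and p the attractor of (f_i) in its action on A, then p is the attractor and n is the repeller of (f_i) in its action on B. -/

import Mathlib

open Set Filter Topology Pointwise

/-- The set `E` separates the points `x` and `y`: both lie outside `E` and in
different connected components of the complement of `E`. -/
def SepPts {X : Type*} [TopologicalSpace X] (E : Set X) (x y : X) : Prop :=
  x ∉ E ∧ y ∉ E ∧ connectedComponentIn Eᶜ x ≠ connectedComponentIn Eᶜ y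

/-- The set `E` separates the set `Y ⊆ X \ E`: two points of `Y` lie in different
connected components of the complement of `E`. -/
def SepSet {X : Type*} [TopologicalSpace X] (E Y : Set X) : Prop :=
  Y ⊆ Eᶜ ∧ ∃ x ∈ Y, ∃ y ∈ Y, connectedComponentIn Eᶜ x ≠ connectedComponentIn Eᶜ y

/-- Two (closed) sets `A` and `B` cross: they intersect, or each separates the other. -/
def Crosses {X : Type*} [TopologicalSpace X] (A B : Set X) : Prop :=
  (A ∩ B).Nonempty ∨ (SepSet A B ∧ SepSet B A)

/-- There is a (finite) crossing sequence in `𝓐` from `A` to `B`. -/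
def CrossSeqFromTo {X : Type*} [TopologicalSpace X] (𝓐 : Set (Set X)) (A B : Set X) : Prop :=
  ∃ (n : ℕ) (c : ℕ → Set X), c 0 = A ∧ c n = B ∧ (∀ i ≤ n, c i ∈ 𝓐) ∧
    ∀ i < n, Crosses (c i) (c (i + 1))

/-- A collection `𝓐` is cross-connected: any two of its elements are joined by a
crossing sequence in `𝓐`. -/
def CrossConnected {X : Type*} [TopologicalSpace X] (𝓐 : Set (Set X)) : Prop :=
  ∀ A ∈ 𝓐, ∀ B ∈ 𝓐, CrossSeqFromTo 𝓐 A B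

/-- There is a crossing sequence `A, A_1, …, A_n, B` in `𝓐` (with `n ≥ 1`) whose
intermediate terms `A_1, …, A_n` are disjoint from `D`. -/
def CrossSeqAvoiding {X : Type*} [TopologicalSpace X] (𝓐 : Set (Set X)) (A B D : Set X) :
    Prop :=
  ∃ n : ℕ, 1 ≤ n ∧ ∃ c : ℕ → Set X, c 0 = A ∧ c (n + 1) = B ∧ (∀ i ≤ n + 1, c i ∈ 𝓐) ∧
    (∀ i ≤ n, Crosses (c i) (c (i + 1))) ∧ ∀ i, 1 ≤ i → i ≤ n → c i ∩ D = ∅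

/-- A collection of subsets of a metric space is null if for every `ε > 0` only finitely
many of its members have diameter greater than `ε`. -/
def NullFam {X : Type*} [PseudoMetricSpace X] (𝓐 : Set (Set X)) : Prop :=
  ∀ ε : ℝ, 0 < ε → {A ∈ 𝓐 | ε < Metric.diam A}.Finite

/-- A collection `𝓐` is fine if any two distinct points are separated by the union of
some finite subcollection of `𝓐`. -/
def FineFam {X : Type*} [PseudoMetricSpace X] (𝓐 : Set (Set X)) : Prop :=
  ∀ x y : X, x ≠ y → ∃ 𝓑 ⊆ 𝓐, 𝓑.Finite ∧ SepPts (⋃₀ 𝓑) x y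

/-- A sequence of maps `T i : X → X` acts as a convergence sequence on the subset `A`,
with repeller `n ∈ A` and attractor `p ∈ A`: for every compact `C ⊆ A \ {n}` and every
open neighborhood `U` of `p`, eventually `T i '' C ⊆ U`. -/
def ConvSeqOn {X : Type*} [TopologicalSpace X] (A : Set X) (T : ℕ → X → X) (n p : X) :
    Prop :=
  n ∈ A ∧ p ∈ A ∧ ∀ C : Set X, C ⊆ A → IsCompact C → n ∉ C →
    ∀ U : Set X, IsOpen U → p ∈ U → ∀ᶠ i in atTop, T i '' C ⊆ U

/-- The stabilizer of a subset `A ⊆ X` in `G`. -/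
def stab (G : Type*) {X : Type*} [Group G] [MulAction G X] (A : Set X) : Set G :=
  {g : G | g • A = A}

/-- The subset `S` of the group `G` acts as a convergence group on `A ⊆ X`: every
sequence of distinct elements of `S` has a subsequence acting as a convergence
sequence on `A`. -/
def ConvGroupOn {G X : Type*} [Group G] [MulAction G X] [TopologicalSpace X]
    (S : Set G) (A : Set X) : Prop :=
  ∀ g : ℕ → G, (∀ i, g i ∈ S) → Function.Injective g →
    ∃ k : ℕ → ℕ, StrictMono k ∧ ∃ n p : X,
      ConvSeqOn A (fun i => (g (k i) • · : X → X)) n p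

/-- `(G, 𝓐)` is a local convergence pairing on `X`. -/
structure IsLocalConvPairing (G : Type*) {X : Type*} [Group G] [MulAction G X]
    [MetricSpace X] (𝓐 : Set (Set X)) : Prop where
  closed : ∀ A ∈ 𝓐, IsClosed A
  invariant : ∀ g : G, ∀ A ∈ 𝓐, g • A ∈ 𝓐
  big : ∀ A ∈ 𝓐, 2 < A.encard
  null : NullFam 𝓐
  fine : FineFam 𝓐
  stabConv : ∀ A ∈ 𝓐, ConvGroupOn (stab G A) A
  connect : ∀ A ∈ 𝓐, ∀ B ∈ 𝓐, (A ∩ B).encard ≤ 2 →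
    (∀ c : X, A ∩ B = {c} → ∀ b ∈ B, b ≠ c → CrossSeqAvoiding 𝓐 A B {b, c}) ∧
    ((¬ ∃ c : X, A ∩ B = {c}) → CrossSeqAvoiding 𝓐 A B (A ∩ B))

/-!
Images of members of the null family `𝓐` that accumulate at a point `p` without containing it
shrink to `p`. If `f i • x` and `f i • y` tend to `p` and every connected set joining `x` to `y`
meets `E`, then by local connectedness the images `f i • E` accumulate at `p`. Let `n`, `p` be the
repeller and attractor on `A`, and `n'`, `p'` those on `B`. Along a crossing sequence
`A, A₁, …, Aₖ, B` whose intermediate terms avoid `n` and a limit point of `(f i)⁻¹ • p`, each `Aⱼ`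
is shrunk to `p` along a subsequence. As `Aₖ` crosses `B`, this forces `p ∈ B`, and even `p' = p`
when `Aₖ` avoids `n'`.

The inverses `(f i)⁻¹` exchange attractor and repeller, and `A ∩ B` is invariant. If `A ∩ B` has
more than two points, one of them is attracted to both `p` and `p'`. If it has two points,
invariance puts `n`, `n'`, `p` in it, and a crossing sequence avoiding `A ∩ B` gives `p' = p`. If
`A ∩ B = {c}`, invariance gives `c ∈ {n, p}`; for `c = n` a crossing sequence avoiding `c` and a
limit point of `(f i)⁻¹ • p` gives `p ∈ A ∩ B = {c}`, and for `c = p` the same applies to the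
inverses.
-/

theorem sdiff_singleton_nontrivial_of_two_lt_encard {α : Type*} {s : Set α} (hs : 2 < s.encard)
    (a : α) : (s \ {a}).Nontrivial := by
  refine one_lt_encard_iff_nontrivial.1 ?_
  exact (lt_tsub_iff_right.2 (one_add_one_eq_two.trans_lt hs)).trans_le
    (encard_tsub_one_le_encard_sdiff_singleton s a)

section Stab

variable {G X : Type*} [Group G] [MulAction G X] {A B : Set X} {g : G} {x : X}

theorem inv_mem_stab (hg : g ∈ stab G A) : g⁻¹ ∈ stab G A :=
  (MulAction.stabilizer G A).inv_mem hg

theorem smul_mem_of_mem_stab (hg : g ∈ stab G A) (hx : x ∈ A) : g • x ∈ A :=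
  (MulAction.mem_stabilizer_set.1 hg x).2 hx

theorem mem_stab_inter (hA : g ∈ stab G A) (hB : g ∈ stab G B) : g ∈ stab G (A ∩ B) :=
  smul_set_inter.trans (congrArg₂ (· ∩ ·) hA hB)

end Stab

/-! ### Convergence sequences -/

namespace ConvSeqOn

section Maps

variable {X : Type*} [TopologicalSpace X] {A B F : Set X} {S T : ℕ → X → X} {n p n' p' x : X}

theorem comp_tendsto (h : ConvSeqOn A T n p) {φ : ℕ → ℕ} (hφ : Tendsto φ atTop atTop) :
    ConvSeqOn A (T ∘ φ) n p :=
  ⟨h.1, h.2.1, fun C hCA hC hnC U hU hpU => hφ.eventually (h.2.2 C hCA hC hnC U hU hpU)⟩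

theorem tendsto (h : ConvSeqOn A T n p) (hx : x ∈ A) (hxn : x ≠ n) :
    Tendsto (fun i => T i x) atTop (𝓝 p) := by
  refine tendsto_nhds.2 fun U hU hpU => ?_
  filter_upwards [h.2.2 {x} (singleton_subset_iff.2 hx) isCompact_singleton hxn.symm U hU hpU]
    with i hi
  exact hi (mem_image_of_mem _ rfl)

theorem accPt_attractor (h : ConvSeqOn A T n p) (hA : 2 < A.encard) (hmaps : ∀ i, MapsTo (T i) A A)
    (hinj : ∀ i, InjOn (T i) A) : AccPt p (𝓟 A) := by
  refine accPt_iff_nhds.2 fun U hU => ?_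
  obtain ⟨x, ⟨hx, hxn⟩, y, ⟨hy, hyn⟩, hxy⟩ := sdiff_singleton_nontrivial_of_two_lt_encard hA n
  obtain ⟨i, hix, hiy⟩ :=
    (((h.tendsto hx hxn).eventually_mem hU).and ((h.tendsto hy hyn).eventually_mem hU)).exists
  obtain hxp | hyp : T i x ≠ p ∨ T i y ≠ p :=
    not_and_or.1 fun ⟨hxp, hyp⟩ => hxy (hinj i hx hy (hxp.trans hyp.symm))
  · exact ⟨T i x, ⟨hix, hmaps i hx⟩, hxp⟩
  · exact ⟨T i y, ⟨hiy, hmaps i hy⟩, hyp⟩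

theorem of_rightInvOn [T2Space X] (h : ConvSeqOn A T n p) (hA : IsCompact A)
    (hmaps : ∀ i, MapsTo (S i) A A) (hinv : ∀ i, RightInvOn (S i) (T i) A) :
    ConvSeqOn A S p n := by
  refine ⟨h.2.1, h.1, fun C hCA hC hpC U hU hnU => ?_⟩
  filter_upwards [h.2.2 (A \ U) sdiff_subset (hA.diff hU) (fun hn => hn.2 hnU) Cᶜ
    hC.isClosed.isOpen_compl hpC] with i hi
  rintro _ ⟨x, hx, rfl⟩
  by_contra hxU
  have hTS : T i (S i x) ∈ Cᶜ := hi (mem_image_of_mem _ ⟨hmaps i (hCA hx), hxU⟩)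
  exact hTS (by rwa [hinv i (hCA hx)])

theorem subset_singleton_attractor [T1Space X] (h : ConvSeqOn A T n p) (hF : F.Finite)
    (hFA : F ⊆ A) (hsurj : ∀ i, SurjOn (T i) F F) (hn : n ∉ F) : F ⊆ {p} := by
  obtain ⟨i, hi⟩ := (h.2.2 F hFA hF.isCompact hn (F \ {p})ᶜ
    hF.sdiff.isClosed.isOpen_compl fun hp => hp.2 rfl).exists
  intro x hx
  by_contra hxp
  exact hi (hsurj i hx) ⟨hx, hxp⟩

theorem attractor_eq_of_two_lt_encard_inter [T2Space X] (hA : ConvSeqOn A T n p)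
    (hB : ConvSeqOn B T n' p') (hAB : 2 < (A ∩ B).encard) : p' = p := by
  obtain ⟨z, ⟨hz, hzn⟩, hzn'⟩ := (sdiff_singleton_nontrivial_of_two_lt_encard hAB n).exists_ne n'
  exact tendsto_nhds_unique (hB.tendsto hz.2 hzn') (hA.tendsto hz.1 hzn)

end Maps

section Action

variable {G X : Type*} [Group G] [MulAction G X] [TopologicalSpace X] [T2Space X] {A : Set X}
  {f : ℕ → G} {n p : X}

theorem inv_smul (h : ConvSeqOn A (fun i x => f i • x) n p) (hA : IsCompact A)
    (hf : ∀ i, f i ∈ stab G A) : ConvSeqOn A (fun i x => (f i)⁻¹ • x) p n :=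
  h.of_rightInvOn hA (fun i _ hx => smul_mem_of_mem_stab (inv_mem_stab (hf i)) hx)
    fun i x _ => smul_inv_smul (f i) x

theorem accPt_repeller (h : ConvSeqOn A (fun i x => f i • x) n p) (hA : IsCompact A)
    (hA2 : 2 < A.encard) (hf : ∀ i, f i ∈ stab G A) : AccPt n (𝓟 A) :=
  (h.inv_smul hA hf).accPt_attractor hA2
    (fun i _ hx => smul_mem_of_mem_stab (inv_mem_stab (hf i)) hx)
    fun i => (MulAction.injective (f i)⁻¹).injOn

end Action

end ConvSeqOn

/-! ### Blocking sets -/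

/-- The set `E` blocks `x` from `y`: every connected set containing both points meets `E`.
This covers at once the two ways in which sets can cross: `x ∈ E`, and `E` separates `x` from
`y`. -/
def Blocks {X : Type*} [TopologicalSpace X] (E : Set X) (x y : X) : Prop :=
  ∀ V : Set X, IsPreconnected V → x ∈ V → y ∈ V → (E ∩ V).Nonempty

section Blocks

variable {G X : Type*} [TopologicalSpace X] {A E : Set X} {n p q x y : X}

theorem blocks_of_mem (hx : x ∈ E) : Blocks E x y := fun _ _ hxV _ => ⟨x, hx, hxV⟩

theorem blocks_of_connectedComponentIn_ne
    (h : connectedComponentIn Eᶜ x ≠ connectedComponentIn Eᶜ y) : Blocks E x y := by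
  intro V hV hx hy
  by_contra hEV
  have hVE : V ⊆ Eᶜ := fun z hzV hzE => hEV ⟨z, hzE, hzV⟩
  exact h (connectedComponentIn_eq (hV.subset_connectedComponentIn hx hVE hy))

namespace Blocks

theorem symm (h : Blocks E x y) : Blocks E y x := fun V hV hy hx => h V hV hx hy

theorem smul [Group G] [MulAction G X] [ContinuousConstSMul G X] (h : Blocks E x y) (g : G) :
    Blocks (g • E) (g • x) (g • y) := by
  intro V hV hx hy
  obtain ⟨z, hzE, hzV⟩ := h (g⁻¹ • V) (hV.image _ (continuous_const_smul g⁻¹).continuousOn)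
    (mem_inv_smul_set_iff.2 hx) (mem_inv_smul_set_iff.2 hy)
  exact ⟨g • z, smul_mem_smul_set hzE, mem_inv_smul_set_iff.1 hzV⟩

theorem exists_ne [LocallyConnectedSpace X] (h : Blocks E x y) (hE : IsClosed E) (hx : x ∈ A)
    (hn : AccPt n (𝓟 A)) (hnE : n ∉ E) : ∃ x' ∈ A, x' ≠ n ∧ Blocks E x' y := by
  obtain rfl | hxn := eq_or_ne x n
  · obtain ⟨W, ⟨hWo, hxW, hW⟩, hWE⟩ := (LocallyConnectedSpace.open_connected_basis x).mem_iff.1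
      (hE.isOpen_compl.mem_nhds hnE)
    obtain ⟨x', ⟨hx'W, hx'A⟩, hx'x⟩ := accPt_iff_nhds.1 hn W (hWo.mem_nhds hxW)
    refine ⟨x', hx'A, hx'x, fun V hV hx'V hyV => ?_⟩
    obtain ⟨z, hzE, hzW | hzV⟩ := h (W ∪ V) (hW.isPreconnected.union x' hx'W hx'V hV)
      (Or.inl hxW) (Or.inr hyV)
    · exact absurd hzE (hWE hzW)
    · exact ⟨z, hzE, hzV⟩
  · exact ⟨x, hx, hxn, h⟩

end Blocks

section Limits

variable [LocallyConnectedSpace X] {ι : Type*} {l : Filter ι} {C : ι → Set X} {u v : ι → X}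

theorem eventually_inter_nonempty_of_blocks (hC : ∀ i, Blocks (C i) (u i) (v i))
    (hu : Tendsto u l (𝓝 p)) (hv : Tendsto v l (𝓝 p)) {U : Set X} (hU : U ∈ 𝓝 p) :
    ∀ᶠ i in l, (C i ∩ U).Nonempty := by
  obtain ⟨V, ⟨hVo, hpV, hV⟩, hVU⟩ := (LocallyConnectedSpace.open_connected_basis p).mem_iff.1 hU
  filter_upwards [hu.eventually_mem (hVo.mem_nhds hpV), hv.eventually_mem (hVo.mem_nhds hpV)]
    with i hui hvi
  exact (hC i V hV.isPreconnected hui hvi).mono (inter_subset_inter_right _ hVU)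

theorem eq_of_tendsto_smallSets_of_blocks [T2Space X] [l.NeBot]
    (hC : ∀ i, Blocks (C i) (u i) (v i)) (hu : Tendsto u l (𝓝 q)) (hv : Tendsto v l (𝓝 q))
    (hCp : Tendsto C l (𝓝 p).smallSets) : q = p := by
  by_contra hqp
  obtain ⟨U, hU, V, hV, hUV⟩ := Filter.disjoint_iff.1 (disjoint_nhds_nhds.2 hqp)
  obtain ⟨i, ⟨z, hzC, hzU⟩, hCV⟩ := ((eventually_inter_nonempty_of_blocks hC hu hv hU).and
    (tendsto_smallSets_iff.1 hCp V hV)).exists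
  exact hUV.notMem_of_mem_left hzU (hCV hzC)

end Limits

end Blocks

/-! ### Crossing sets -/

section Crosses

variable {X : Type*} [TopologicalSpace X] {𝓐 : Set (Set X)} {A B D E : Set X} {n : X}

theorem Crosses.symm (h : Crosses A B) : Crosses B A :=
  h.imp (fun hAB => inter_comm A B ▸ hAB) And.symm

theorem CrossSeqAvoiding.symm (h : CrossSeqAvoiding 𝓐 A B D) : CrossSeqAvoiding 𝓐 B A D := by
  obtain ⟨k, hk, c, hc0, hck, hmem, hcross, hdisj⟩ := h
  refine ⟨k, hk, fun i => c (k + 1 - i), hck, by simpa only [Nat.sub_self] using hc0,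
    fun i _ => hmem _ (Nat.sub_le _ _), fun i hi => ?_,
    fun i hi hik => hdisj _ (by omega) (by omega)⟩
  have h := (hcross (k - i) (Nat.sub_le _ _)).symm
  rwa [← Nat.sub_add_comm hi, ← Nat.add_sub_add_right k 1 i] at h

theorem Crosses.exists_blocks (h : Crosses A E) : ∃ x ∈ A, ∃ y ∈ A, Blocks E x y := by
  obtain ⟨x, hxA, hxE⟩ | ⟨-, -, x, hx, y, hy, hxy⟩ := h
  · exact ⟨x, hxA, x, hxA, blocks_of_mem hxE⟩
  · exact ⟨x, hx, y, hy, blocks_of_connectedComponentIn_ne hxy⟩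

theorem Crosses.exists_blocks_ne [LocallyConnectedSpace X] (h : Crosses A E) (hE : IsClosed E)
    (hn : AccPt n (𝓟 A)) (hnE : n ∉ E) :
    ∃ x ∈ A, ∃ y ∈ A, x ≠ n ∧ y ≠ n ∧ Blocks E x y := by
  obtain ⟨x, hx, y, hy, hxy⟩ := h.exists_blocks
  obtain ⟨x', hx', hxn, hx'y⟩ := hxy.exists_ne hE hx hn hnE
  obtain ⟨y', hy', hyn, hy'x'⟩ := hx'y.symm.exists_ne hE hy hn hnE
  exact ⟨x', hx', y', hy', hxn, hyn, hy'x'.symm⟩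

end Crosses

/-! ### Null families -/

-- `Metric.diam` is `0` on unbounded sets, so nullness alone does not make such members small.
theorem NullFam.tendsto_smallSets {X ι : Type*} [PseudoMetricSpace X] {𝓐 : Set (Set X)}
    (h𝓐 : NullFam 𝓐) (hclosed : ∀ A ∈ 𝓐, IsClosed A) (hbdd : ∀ A ∈ 𝓐, Bornology.IsBounded A)
    {l : Filter ι} {C : ι → Set X} (hC : ∀ i, C i ∈ 𝓐) {p : X} (hp : ∀ᶠ i in l, p ∉ C i)
    (hmeet : ∀ U ∈ 𝓝 p, ∀ᶠ i in l, (C i ∩ U).Nonempty) :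
    Tendsto C l (𝓝 p).smallSets := by
  refine tendsto_smallSets_iff.2 fun U hU => ?_
  obtain ⟨ε, hε, hεU⟩ := Metric.mem_nhds_iff.1 hU
  let large : Set (Set X) := {K | K ∈ 𝓐 ∧ ε / 2 < Metric.diam K ∧ p ∉ K}
  have hlarge : (⋃₀ large)ᶜ ∈ 𝓝 p := by
    have hfin : large.Finite := (h𝓐 _ (half_pos hε)).subset fun K hK => ⟨hK.1, hK.2.1⟩
    have hcl : IsClosed (⋃₀ large) := by
      rw [sUnion_eq_biUnion]
      exact hfin.isClosed_biUnion fun K hK => hclosed K hK.1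
    exact hcl.isOpen_compl.mem_nhds fun ⟨K, hK, hpK⟩ => hK.2.2 hpK
  filter_upwards [hp, hmeet _ (inter_mem (Metric.ball_mem_nhds p (half_pos hε)) hlarge)]
  rintro i hpi ⟨z, hzC, hzp, hzlarge⟩ w hw
  have hdiam : Metric.diam (C i) ≤ ε / 2 :=
    not_lt.1 fun hlt => hzlarge ⟨C i, ⟨hC i, hlt, hpi⟩, hzC⟩
  refine hεU (Metric.mem_ball.2 ?_)
  calc dist w p ≤ dist w z + dist z p := dist_triangle w z p
    _ < ε / 2 + ε / 2 :=
      add_lt_add_of_le_of_lt ((Metric.dist_le_diam_of_mem (hbdd _ (hC i)) hw hzC).trans hdiam) hzp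
    _ = ε := add_halves ε

/-- An invariant null family: a null family of compact sets, invariant under the action of `G`.
This is what a local convergence pairing on a compact space provides for controlling the images of
its members. -/
structure IsInvariantNullFam (G : Type*) {X : Type*} [Group G] [MulAction G X]
    [PseudoMetricSpace X] (𝓐 : Set (Set X)) : Prop where
  isCompact : ∀ A ∈ 𝓐, IsCompact A
  smul_mem : ∀ g : G, ∀ A ∈ 𝓐, g • A ∈ 𝓐
  null : NullFam 𝓐

section Shrinking

variable {G X : Type*} [Group G] [MulAction G X] [MetricSpace X] [LocallyConnectedSpace X]
  [ContinuousConstSMul G X] {𝓐 : Set (Set X)} {A B D E : Set X} {n p n' p' : X}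

theorem IsInvariantNullFam.tendsto_smallSets_of_blocks {ι : Type*} {l : Filter ι} {f : ι → G}
    {x y : X} (h𝓐 : IsInvariantNullFam G 𝓐) (hE : E ∈ 𝓐) (hED : Disjoint E D)
    (hD : Tendsto (fun i => (f i)⁻¹ • p) l (𝓝ˢ D)) (hxy : Blocks E x y)
    (hx : Tendsto (fun i => f i • x) l (𝓝 p)) (hy : Tendsto (fun i => f i • y) l (𝓝 p)) :
    Tendsto (fun i => f i • E) l (𝓝 p).smallSets := by
  have hp : ∀ᶠ i in l, p ∉ f i • E := by
    have hEc : Eᶜ ∈ 𝓝ˢ D :=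
      (h𝓐.isCompact E hE).isClosed.isOpen_compl.mem_nhdsSet.2 hED.subset_compl_left
    filter_upwards [hD.eventually_mem hEc] with i hi
    rwa [mem_smul_set_iff_inv_smul_mem]
  exact h𝓐.null.tendsto_smallSets (fun K hK => (h𝓐.isCompact K hK).isClosed)
    (fun K hK => (h𝓐.isCompact K hK).isBounded) (fun i => h𝓐.smul_mem (f i) E hE) hp
    fun U hU => eventually_inter_nonempty_of_blocks (fun i => hxy.smul (f i)) hx hy hU

variable {f : ℕ → G}

theorem CrossSeqAvoiding.exists_tendsto_smallSets (hcs : CrossSeqAvoiding 𝓐 A B D)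
    (h𝓐 : IsInvariantNullFam G 𝓐) (hA : ConvSeqOn A (fun i x => f i • x) n p)
    (hnA : AccPt n (𝓟 A)) (hnD : n ∈ D)
    (hD : Tendsto (fun i => (f i)⁻¹ • p) atTop (𝓝ˢ D)) :
    ∃ E ∈ 𝓐, Disjoint E D ∧ Crosses E B ∧
      Tendsto (fun i => f i • E) atTop (𝓝 p).smallSets := by
  obtain ⟨k, hk, c, rfl, rfl, hmem, hcross, hdisj⟩ := hcs
  have hcD (j : ℕ) (hj : 1 ≤ j) (hjk : j ≤ k) : Disjoint (c j) D :=
    disjoint_iff_inter_eq_empty.2 (hdisj j hj hjk)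
  have hshrink (j : ℕ) (hj : 1 ≤ j) :
      j ≤ k → Tendsto (fun i => f i • c j) atTop (𝓝 p).smallSets := by
    induction j, hj using Nat.le_induction with
    | base =>
      intro h1k
      have hc1 : c 1 ∈ 𝓐 := hmem 1 (by omega)
      obtain ⟨x, hx, y, hy, hxn, hyn, hxy⟩ := (hcross 0 k.zero_le).exists_blocks_ne
        (h𝓐.isCompact _ hc1).isClosed hnA ((hcD 1 le_rfl h1k).notMem_of_mem_right hnD)
      exact h𝓐.tendsto_smallSets_of_blocks hc1 (hcD 1 le_rfl h1k) hD hxy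
        (hA.tendsto hx hxn) (hA.tendsto hy hyn)
    | succ j hj ih =>
      intro hjk
      have hcj (x : X) (hx : x ∈ c j) : Tendsto (fun i => f i • x) atTop (𝓝 p) :=
        (ih (Nat.le_of_succ_le hjk)).of_smallSets (.of_forall fun _ => smul_mem_smul_set hx)
      obtain ⟨x, hx, y, hy, hxy⟩ := (hcross j (Nat.le_of_succ_le hjk)).exists_blocks
      exact h𝓐.tendsto_smallSets_of_blocks (hmem _ (by omega)) (hcD _ (by omega) hjk) hD hxy
        (hcj x hx) (hcj y hy)
  exact ⟨c k, hmem k k.le_succ, hcD k hk le_rfl, hcross k le_rfl, hshrink k hk le_rfl⟩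

theorem ConvSeqOn.attractor_eq_of_crosses (hB : ConvSeqOn B (fun i x => f i • x) n' p')
    (hnB : AccPt n' (𝓟 B)) (hE : IsClosed E) (hnE : n' ∉ E) (hEB : Crosses E B)
    (hEp : Tendsto (fun i => f i • E) atTop (𝓝 p).smallSets) : p' = p := by
  obtain ⟨x, hx, y, hy, hxn, hyn, hxy⟩ := hEB.symm.exists_blocks_ne hE hnB hnE
  exact eq_of_tendsto_smallSets_of_blocks (fun i => hxy.smul (f i)) (hB.tendsto hx hxn)
    (hB.tendsto hy hyn) hEp

theorem ConvSeqOn.mem_of_crosses (hB : ConvSeqOn B (fun i x => f i • x) n' p')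
    (hBcl : IsClosed B) (hfB : ∀ i, f i ∈ stab G B) (hnB : AccPt n' (𝓟 B)) (hE : IsClosed E)
    (hEB : Crosses E B) (hEp : Tendsto (fun i => f i • E) atTop (𝓝 p).smallSets) : p ∈ B := by
  by_cases hnE : n' ∈ E
  · exact hBcl.mem_of_tendsto (hEp.of_smallSets (.of_forall fun _ => smul_mem_smul_set hnE))
      (.of_forall fun i => smul_mem_of_mem_stab (hfB i) hB.1)
  · exact hB.attractor_eq_of_crosses hnB hE hnE hEB hEp ▸ hB.2.1

end Shrinking

/-! ### The intersection of two members -/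

section Intersection

variable {G X : Type*} [Group G] [MulAction G X] [MetricSpace X] [LocallyConnectedSpace X]
  [ContinuousConstSMul G X] {𝓐 : Set (Set X)} {A B : Set X} {f : ℕ → G} {n p n' p' c : X}

theorem attractor_eq_repeller_of_inter_eq_singleton (h𝓐 : IsInvariantNullFam G 𝓐)
    (hA : A ∈ 𝓐) (hB : B ∈ 𝓐) (hA2 : 2 < A.encard) (hB2 : 2 < B.encard)
    (hfA : ∀ i, f i ∈ stab G A) (hfB : ∀ i, f i ∈ stab G B)
    (hcA : ConvSeqOn A (fun i x => f i • x) n p) (hcB : ConvSeqOn B (fun i x => f i • x) n' p')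
    (hAB : A ∩ B = {n}) (hcs : ∀ a ∈ A, a ≠ n → CrossSeqAvoiding 𝓐 A B {a, n}) : p = n := by
  have hAc := h𝓐.isCompact A hA
  have hBc := h𝓐.isCompact B hB
  obtain ⟨m, hmA, φ, hφ, hm⟩ := hAc.tendsto_subseq (x := fun i => (f i)⁻¹ • p)
    fun i => smul_mem_of_mem_stab (inv_mem_stab (hfA i)) hcA.2.1
  obtain ⟨a, haA, han, hma⟩ : ∃ a ∈ A, a ≠ n ∧ m ∈ ({a, n} : Set X) := by
    obtain rfl | hmn := eq_or_ne m n
    · obtain ⟨a, ha, ham⟩ := (sdiff_singleton_nontrivial_of_two_lt_encard hA2 m).nonempty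
      exact ⟨a, ha, ham, Or.inr rfl⟩
    · exact ⟨m, hmA, hmn, Or.inl rfl⟩
  obtain ⟨E, hE, -, hEB, hEp⟩ := (hcs a haA han).exists_tendsto_smallSets (f := f ∘ φ) h𝓐
    (hcA.comp_tendsto hφ.tendsto_atTop) (hcA.accPt_repeller hAc hA2 hfA) (Or.inr rfl)
    (hm.mono_right (nhds_le_nhdsSet hma))
  have hpB : p ∈ B := ConvSeqOn.mem_of_crosses (hcB.comp_tendsto hφ.tendsto_atTop) hBc.isClosed
    (fun i => hfB (φ i)) (hcB.accPt_repeller hBc hB2 hfB) (h𝓐.isCompact E hE).isClosed hEB hEp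
  exact hAB.subset ⟨hcA.2.1, hpB⟩

theorem repeller_and_attractor_eq_of_inter_eq_singleton (h𝓐 : IsInvariantNullFam G 𝓐)
    (hA : A ∈ 𝓐) (hB : B ∈ 𝓐) (hA2 : 2 < A.encard) (hB2 : 2 < B.encard)
    (hfA : ∀ i, f i ∈ stab G A) (hfB : ∀ i, f i ∈ stab G B)
    (hcA : ConvSeqOn A (fun i x => f i • x) n p) (hcB : ConvSeqOn B (fun i x => f i • x) n' p')
    (hAB : A ∩ B = {c}) (hcs : ∀ a ∈ A, a ≠ c → CrossSeqAvoiding 𝓐 A B {a, c}) :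
    n = c ∧ p = c := by
  have hcAB : c ∈ A ∩ B := hAB ▸ mem_singleton c
  obtain rfl | hnc := eq_or_ne n c
  · exact ⟨rfl, attractor_eq_repeller_of_inter_eq_singleton h𝓐 hA hB hA2 hB2 hfA hfB hcA hcB hAB
      hcs⟩
  · obtain rfl : c = p := hcA.subset_singleton_attractor (F := A ∩ B) (hAB ▸ finite_singleton c)
      inter_subset_left (fun i => (mem_stab_inter (hfA i) (hfB i)).superset) (hAB ▸ hnc) hcAB
    exact ⟨attractor_eq_repeller_of_inter_eq_singleton h𝓐 hA hB hA2 hB2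
      (fun i => inv_mem_stab (hfA i)) (fun i => inv_mem_stab (hfB i))
      (hcA.inv_smul (h𝓐.isCompact A hA) hfA) (hcB.inv_smul (h𝓐.isCompact B hB) hfB) hAB hcs, rfl⟩

theorem attractor_eq_of_inter_nontrivial_of_finite (h𝓐 : IsInvariantNullFam G 𝓐)
    (hA : A ∈ 𝓐) (hB : B ∈ 𝓐) (hA2 : 2 < A.encard) (hB2 : 2 < B.encard)
    (hfA : ∀ i, f i ∈ stab G A) (hfB : ∀ i, f i ∈ stab G B)
    (hcA : ConvSeqOn A (fun i x => f i • x) n p) (hcB : ConvSeqOn B (fun i x => f i • x) n' p')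
    (hfin : (A ∩ B).Finite) (hAB : (A ∩ B).Nontrivial)
    (hcs : CrossSeqAvoiding 𝓐 A B (A ∩ B)) : p' = p := by
  have hAc := h𝓐.isCompact A hA
  have hBc := h𝓐.isCompact B hB
  have hfAB (i : ℕ) : f i ∈ stab G (A ∩ B) := mem_stab_inter (hfA i) (hfB i)
  have hn : n ∈ A ∩ B := by_contra fun hn => hAB.not_subset_singleton <|
    hcA.subset_singleton_attractor hfin inter_subset_left (fun i => (hfAB i).superset) hn
  have hn' : n' ∈ A ∩ B := by_contra fun hn' => hAB.not_subset_singleton <|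
    hcB.subset_singleton_attractor hfin inter_subset_right (fun i => (hfAB i).superset) hn'
  have hp : p ∈ A ∩ B := by_contra fun hp => hAB.not_subset_singleton <|
    (hcA.inv_smul hAc hfA).subset_singleton_attractor hfin inter_subset_left
      (fun i => (inv_mem_stab (hfAB i)).superset) hp
  have hpinv (i : ℕ) : (f i)⁻¹ • p ∈ A ∩ B := smul_mem_of_mem_stab (inv_mem_stab (hfAB i)) hp
  have hD : Tendsto (fun i => (f i)⁻¹ • p) atTop (𝓝ˢ (A ∩ B)) :=
    (tendsto_principal.2 (.of_forall hpinv)).mono_right principal_le_nhdsSet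
  obtain ⟨E, hE, hED, hEB, hEp⟩ :=
    hcs.exists_tendsto_smallSets h𝓐 hcA (hcA.accPt_repeller hAc hA2 hfA) hn hD
  exact hcB.attractor_eq_of_crosses (hcB.accPt_repeller hBc hB2 hfB)
    (h𝓐.isCompact E hE).isClosed (hED.notMem_of_mem_right hn') hEB hEp

theorem attractor_eq_of_inter_nontrivial (h𝓐 : IsInvariantNullFam G 𝓐)
    (hA : A ∈ 𝓐) (hB : B ∈ 𝓐) (hA2 : 2 < A.encard) (hB2 : 2 < B.encard)
    (hfA : ∀ i, f i ∈ stab G A) (hfB : ∀ i, f i ∈ stab G B)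
    (hcA : ConvSeqOn A (fun i x => f i • x) n p) (hcB : ConvSeqOn B (fun i x => f i • x) n' p')
    (hAB : (A ∩ B).Nontrivial) (hcs : (A ∩ B).encard ≤ 2 → CrossSeqAvoiding 𝓐 A B (A ∩ B)) :
    p' = p := by
  obtain hle | hlt := le_or_gt (A ∩ B).encard 2
  · exact attractor_eq_of_inter_nontrivial_of_finite h𝓐 hA hB hA2 hB2 hfA hfB hcA hcB
      (finite_of_encard_le_coe (k := 2) hle) hAB (hcs hle)
  · exact hcA.attractor_eq_of_two_lt_encard_inter hcB hlt

theorem matching_attractor_repeller_general (h𝓐 : IsInvariantNullFam G 𝓐)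
    (hbig : ∀ A ∈ 𝓐, 2 < A.encard)
    (hconn : ∀ A ∈ 𝓐, ∀ B ∈ 𝓐, (A ∩ B).encard ≤ 2 →
      (∀ c : X, A ∩ B = {c} → ∀ b ∈ B, b ≠ c → CrossSeqAvoiding 𝓐 A B {b, c}) ∧
      ((¬ ∃ c : X, A ∩ B = {c}) → CrossSeqAvoiding 𝓐 A B (A ∩ B)))
    (hA : A ∈ 𝓐) (hB : B ∈ 𝓐) (hAB : (A ∩ B).Nonempty)
    (hfA : ∀ i, f i ∈ stab G A) (hfB : ∀ i, f i ∈ stab G B)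
    (hcA : ConvSeqOn A (fun i x => f i • x) n p) (hcB : ConvSeqOn B (fun i x => f i • x) n' p') :
    p' = p ∧ n' = n := by
  have hA2 := hbig A hA
  have hB2 := hbig B hB
  obtain ⟨c, hc⟩ | hnt := hAB.exists_eq_singleton_or_nontrivial
  · have hc' : B ∩ A = {c} := inter_comm A B ▸ hc
    have hcard : (A ∩ B).encard ≤ 2 := hc ▸ (encard_singleton c).trans_le one_le_two
    obtain ⟨rfl, rfl⟩ := repeller_and_attractor_eq_of_inter_eq_singleton h𝓐 hA hB hA2 hB2 hfA hfB
      hcA hcB hc fun a ha hac =>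
        ((hconn B hB A hA (inter_comm A B ▸ hcard)).1 _ hc' a ha hac).symm
    exact (repeller_and_attractor_eq_of_inter_eq_singleton h𝓐 hB hA hB2 hA2 hfB hfA hcB hcA hc'
      fun b hb hbc => ((hconn A hA B hB hcard).1 _ hc b hb hbc).symm).symm
  · have hcs (hcard : (A ∩ B).encard ≤ 2) : CrossSeqAvoiding 𝓐 A B (A ∩ B) :=
      (hconn A hA B hB hcard).2 fun ⟨_, hc⟩ => hnt.ne_singleton hc
    exact ⟨attractor_eq_of_inter_nontrivial h𝓐 hA hB hA2 hB2 hfA hfB hcA hcB hnt hcs,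
      attractor_eq_of_inter_nontrivial h𝓐 hA hB hA2 hB2 (fun i => inv_mem_stab (hfA i))
        (fun i => inv_mem_stab (hfB i)) (hcA.inv_smul (h𝓐.isCompact A hA) hfA)
        (hcB.inv_smul (h𝓐.isCompact B hB) hfB) hnt hcs⟩

end Intersection

/-- Theorem: if `A ∩ B ≠ ∅` and `(f_i) ⊆ st(A) ∩ st(B)` acts as a convergence
sequence on both `A` and `B`, with attractor `p` and repeller `n` on `A`, then the
attractor and repeller on `B` are also `p` and `n`. -/
theorem matching_attractor_repeller {G X : Type*} [Group G] [MulAction G X]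
    [MetricSpace X] [CompactSpace X] [ConnectedSpace X] [LocallyConnectedSpace X]
    [ContinuousConstSMul G X]
    (hcut : ∀ x : X, IsPreconnected ({x}ᶜ : Set X))
    (𝓐 : Set (Set X)) (h : IsLocalConvPairing G 𝓐)
    (A B : Set X) (hA : A ∈ 𝓐) (hB : B ∈ 𝓐) (hAB : (A ∩ B).Nonempty)
    (f : ℕ → G) (hfA : ∀ i, f i ∈ stab G A) (hfB : ∀ i, f i ∈ stab G B)
    (n p n' p' : X)
    (hcA : ConvSeqOn A (fun i (x : X) => f i • x) n p)
    (hcB : ConvSeqOn B (fun i (x : X) => f i • x) n' p') :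
    p' = p ∧ n' = n := by
  exact matching_attractor_repeller_general
    ⟨fun A hA => (h.closed A hA).isCompact, h.invariant, h.null⟩ h.big h.connect hA hB hAB hfA hfB
    hcA hcB
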